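/- arXiv:2603.21267 — 2 statements merged into one kernel-verified Lean document; each statement's English description precedes it below -/
import Mathlib

section
/- Let (C,p,Q) be a Brascamp–Lieb datum. Then BL(C,p,Q) < +∞ if and only if every linear subspace V ⊆ ℝⁿ satisfies dim V ≤ ∑_{j=1}^m p_j dim(C_j V). -/
open MeasureTheory Matrix Module
open scoped ENNReal

noncomputable section

/-- The regularized Brascamp–Lieb constant of a datum `(C, p, Q)`. -/
def BLconst {n m : ℕ} {ni : Fin m → ℕ} (C : ∀ i, Matrix (Fin (ni i)) (Fin n) ℝ)
    (p : Fin m → ℝ) (Q : ∀ i, Matrix (Fin (ni i)) (Fin (ni i)) ℝ) : ℝ≥0∞ :=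
  ⨆ (B : ∀ i, Matrix (Fin (ni i)) (Fin (ni i)) ℝ)
    (_ : ∀ i, (B i).PosDef ∧ (Q i - B i).PosSemidef),
    ((∏ i, ENNReal.ofReal ((B i).det) ^ p i) /
        ENNReal.ofReal ((∑ i, p i • ((C i)ᵀ * B i * C i)).det)) ^ ((2 : ℝ)⁻¹)

/-- The quadratic form `∑ p_i C_iᵀ B_i C_i` is positive definite when the `C_i` have no common
kernel. -/
theorem posDef_sum_smul_transpose_mul_mul {n m : ℕ} {ni : Fin m → ℕ}
    {C : ∀ i, Matrix (Fin (ni i)) (Fin n) ℝ}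
    (hker : ∀ x : Fin n → ℝ, (∀ i, (C i).mulVec x = 0) → x = 0)
    {p : Fin m → ℝ} (hp : ∀ i, 0 < p i)
    {B : ∀ i, Matrix (Fin (ni i)) (Fin (ni i)) ℝ} (hB : ∀ i, (B i).PosDef) :
    (∑ i, p i • ((C i)ᵀ * B i * C i)).PosDef := by
  have hterm : ∀ i, (p i • ((C i)ᵀ * B i * C i)).PosSemidef := fun i =>
    ((hB i).posSemidef.conjTranspose_mul_mul_same (C i)).smul (hp i).le
  have hsum : (∑ i, p i • ((C i)ᵀ * B i * C i)).PosSemidef :=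
    posSemidef_sum _ fun i _ => hterm i
  refine PosDef.of_dotProduct_mulVec_pos hsum.1 fun {x} hx => ?_
  obtain ⟨i, hi⟩ : ∃ i, (C i).mulVec x ≠ 0 := by
    by_contra! h
    exact hx (hker x h)
  have hval : ∀ j, x ⬝ᵥ (p j • ((C j)ᵀ * B j * C j)) *ᵥ x
      = p j * ((C j *ᵥ x) ⬝ᵥ B j *ᵥ (C j *ᵥ x)) := by
    intro j
    rw [smul_mulVec, dotProduct_smul, smul_eq_mul, Matrix.mul_assoc, ← mulVec_mulVec,
      ← mulVec_mulVec, dotProduct_mulVec x, vecMul_transpose]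
  have hnn : ∀ j, 0 ≤ x ⬝ᵥ (p j • ((C j)ᵀ * B j * C j)) *ᵥ x := fun j => by
    simpa using (hterm j).dotProduct_mulVec_nonneg x
  have hpos : 0 < x ⬝ᵥ (p i • ((C i)ᵀ * B i * C i)) *ᵥ x := by
    rw [hval]
    exact mul_pos (hp i) (by simpa using (hB i).dotProduct_mulVec_pos hi)
  rw [star_trivial, sum_mulVec, dotProduct_sum]
  exact Finset.sum_pos' (fun j _ => hnn j) ⟨i, Finset.mem_univ i, hpos⟩

/-- Finiteness of the Brascamp–Lieb constant as a determinant inequality over `ℝ`. -/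
theorem BLconst_lt_top_iff_exists_forall_le {n m : ℕ} {ni : Fin m → ℕ}
    {C : ∀ i, Matrix (Fin (ni i)) (Fin n) ℝ}
    (hker : ∀ x : Fin n → ℝ, (∀ i, (C i).mulVec x = 0) → x = 0)
    {p : Fin m → ℝ} (hp : ∀ i, 0 < p i)
    (Q : ∀ i, Matrix (Fin (ni i)) (Fin (ni i)) ℝ) :
    BLconst C p Q < ⊤ ↔ ∃ K : ℝ, ∀ B : ∀ i, Matrix (Fin (ni i)) (Fin (ni i)) ℝ,
      (∀ i, (B i).PosDef ∧ (Q i - B i).PosSemidef) →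
        ∏ i, (B i).det ^ p i ≤ K * (∑ i, p i • ((C i)ᵀ * B i * C i)).det := by
  have hterm : ∀ B : ∀ i, Matrix (Fin (ni i)) (Fin (ni i)) ℝ, (∀ i, (B i).PosDef) →
      ((∏ i, ENNReal.ofReal ((B i).det) ^ p i) /
        ENNReal.ofReal ((∑ i, p i • ((C i)ᵀ * B i * C i)).det)) ^ ((2 : ℝ)⁻¹)
      = ENNReal.ofReal (((∏ i, (B i).det ^ p i) /
        (∑ i, p i • ((C i)ᵀ * B i * C i)).det) ^ ((2 : ℝ)⁻¹)) := by
    intro B hB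
    have hM := (posDef_sum_smul_transpose_mul_mul hker hp hB).det_pos
    have hprod : 0 ≤ ∏ i, (B i).det ^ p i :=
      Finset.prod_nonneg fun i _ => Real.rpow_nonneg (hB i).det_pos.le _
    rw [← ENNReal.ofReal_rpow_of_nonneg (div_nonneg hprod hM.le) (by norm_num),
      ENNReal.ofReal_div_of_pos hM,
      ENNReal.ofReal_prod_of_nonneg fun i _ => Real.rpow_nonneg (hB i).det_pos.le _]
    simp_rw [ENNReal.ofReal_rpow_of_pos (hB _).det_pos]
  constructor
  · intro h
    refine ⟨(BLconst C p Q).toReal ^ (2 : ℝ), fun B hB => ?_⟩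
    have hM := (posDef_sum_smul_transpose_mul_mul hker hp fun i => (hB i).1).det_pos
    have hprod : 0 ≤ ∏ i, (B i).det ^ p i :=
      Finset.prod_nonneg fun i _ => Real.rpow_nonneg (hB i).1.det_pos.le _
    have hle : ENNReal.ofReal (((∏ i, (B i).det ^ p i) /
        (∑ i, p i • ((C i)ᵀ * B i * C i)).det) ^ ((2 : ℝ)⁻¹)) ≤ BLconst C p Q := by
      rw [← hterm B fun i => (hB i).1]
      exact le_iSup₂ (f := fun (B : ∀ i, Matrix (Fin (ni i)) (Fin (ni i)) ℝ)
        (_ : ∀ i, (B i).PosDef ∧ (Q i - B i).PosSemidef) =>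
          ((∏ i, ENNReal.ofReal ((B i).det) ^ p i) /
            ENNReal.ofReal ((∑ i, p i • ((C i)ᵀ * B i * C i)).det)) ^ ((2 : ℝ)⁻¹)) B hB
    rw [ENNReal.ofReal_le_iff_le_toReal h.ne,
      Real.rpow_inv_le_iff_of_pos (div_nonneg hprod hM.le) ENNReal.toReal_nonneg (by norm_num),
      div_le_iff₀ hM] at hle
    exact hle
  · rintro ⟨K, hK⟩
    refine lt_of_le_of_lt (b := ENNReal.ofReal (K ^ ((2 : ℝ)⁻¹))) (iSup₂_le fun B hB => ?_)
      ENNReal.ofReal_lt_top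
    have hM := (posDef_sum_smul_transpose_mul_mul hker hp fun i => (hB i).1).det_pos
    have hprod : 0 ≤ ∏ i, (B i).det ^ p i :=
      Finset.prod_nonneg fun i _ => Real.rpow_nonneg (hB i).1.det_pos.le _
    rw [hterm B fun i => (hB i).1]
    refine ENNReal.ofReal_le_ofReal (Real.rpow_le_rpow (div_nonneg hprod hM.le) ?_ (by norm_num))
    exact (div_le_iff₀ hM).2 (hK B hB)

/-- A projection matrix along a complement, together with the determinant of the corresponding
one-parameter family of dilations. -/
theorem exists_projection_matrix {k : ℕ} {W W' : Submodule ℝ (Fin k → ℝ)} (h : IsCompl W W') :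
    ∃ P : Matrix (Fin k) (Fin k) ℝ, P * P = P ∧ (∀ x, P *ᵥ x ∈ W) ∧ (∀ x ∈ W, P *ᵥ x = x) ∧
      (∀ x, (1 - P) *ᵥ x ∈ W') ∧
      ∀ t : ℝ, (t • P + (1 - P)).det = t ^ finrank ℝ W := by
  have hmul : ∀ x, LinearMap.toMatrix' (W.projection W' h) *ᵥ x = W.projection W' h x :=
    fun x => LinearMap.toMatrix'_mulVec _ x
  refine ⟨LinearMap.toMatrix' (W.projection W' h), ?_, ?_, ?_, ?_, ?_⟩
  · rw [← LinearMap.toMatrix'_mul, (Submodule.isIdempotentElem_projection h).eq]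
  · intro x
    rw [hmul]
    exact Submodule.projection_apply_mem h x
  · intro x hx
    rw [hmul]
    exact Submodule.projection_apply_of_mem_left h hx
  · intro x
    rw [sub_mulVec, one_mulVec, hmul]
    exact Submodule.sub_projection_mem h x
  · intro t
    have hconj : t • W.projection W' h + (1 - W.projection W' h) =
        (W.prodEquivOfIsCompl W' h : (W × W') →ₗ[ℝ] (Fin k → ℝ)) ∘ₗ
          LinearMap.prodMap (t • LinearMap.id) LinearMap.id ∘ₗ
          ((W.prodEquivOfIsCompl W' h).symm : (Fin k → ℝ) →ₗ[ℝ] (W × W')) := by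
      refine LinearMap.ext fun x => ?_
      obtain ⟨⟨a, b⟩, rfl⟩ := (W.prodEquivOfIsCompl W' h).surjective x
      simp
    have hdet := congrArg LinearMap.det hconj
    rw [LinearMap.det_conj, LinearMap.det_prodMap, LinearMap.det_smul, LinearMap.det_id,
      LinearMap.det_id, mul_one, mul_one] at hdet
    rw [← hdet, ← LinearMap.det_toMatrix']
    congr 1
    simp

/-- Orthogonal projection onto a subspace for the inner product given by a positive definite
matrix. -/
theorem exists_orthogonal_projection_matrix {k : ℕ} {Q : Matrix (Fin k) (Fin k) ℝ}
    (hQ : Q.PosDef) (W : Submodule ℝ (Fin k → ℝ)) :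
    ∃ P : Matrix (Fin k) (Fin k) ℝ, P * P = P ∧ (∀ x ∈ W, P *ᵥ x = x) ∧
      Pᵀ * Q * (1 - P) = 0 ∧
      ∀ t : ℝ, (t • P + (1 - P)).det = t ^ finrank ℝ W := by
  have hsymm : ∀ x y, Q.toBilin' x y = Q.toBilin' y x := by
    intro x y
    have hQT : Qᵀ = Q := hQ.1
    rw [Matrix.toBilin'_apply', Matrix.toBilin'_apply', dotProduct_mulVec, ← mulVec_transpose, hQT,
      dotProduct_comm]
  have hrefl : Q.toBilin'.IsRefl := fun x y hxy => by rw [hsymm, hxy]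
  have hcompl : IsCompl W (Q.toBilin'.orthogonal W) := by
    rw [LinearMap.BilinForm.isCompl_orthogonal_iff_disjoint hrefl, Submodule.disjoint_def]
    intro x hxW hx
    by_contra hne
    have h0 : Q.toBilin' x x = 0 := hx x hxW
    have := hQ.dotProduct_mulVec_pos hne
    rw [Matrix.toBilin'_apply'] at h0
    simp [h0] at this
  obtain ⟨P, hPP, hPW, hPid, hPW', hdet⟩ := exists_projection_matrix hcompl
  refine ⟨P, hPP, hPid, ?_, hdet⟩
  ext i j
  have h0 : Q.toBilin' (P *ᵥ Pi.single i 1) ((1 - P) *ᵥ Pi.single j 1) = 0 :=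
    hPW' (Pi.single j 1) _ (hPW _)
  rw [Matrix.toBilin'_apply', mulVec_mulVec, ← vecMul_transpose, ← dotProduct_mulVec,
    mulVec_mulVec, ← Matrix.mul_assoc] at h0
  simpa using h0

/-- Contracting a positive definite matrix along a subspace makes it smaller in the Loewner
order. -/
theorem posSemidef_sub_dilation {k : ℕ} {Q P : Matrix (Fin k) (Fin k) ℝ} (hQ : Q.PosDef)
    (horth : Pᵀ * Q * (1 - P) = 0) {t : ℝ} (ht0 : 0 ≤ t) (ht1 : t ≤ 1) :
    (Q - (t • P + (1 - P))ᵀ * Q * (t • P + (1 - P))).PosSemidef := by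
  have hQT : Qᵀ = Q := hQ.1
  obtain ⟨R, hR⟩ : ∃ R, R = 1 - P := ⟨_, rfl⟩
  have hPR : (1 : Matrix (Fin k) (Fin k) ℝ) = P + R := by rw [hR]; abel
  rw [← hR] at horth ⊢
  have horth' : Rᵀ * Q * P = 0 := by
    have := congrArg Matrix.transpose horth
    simpa [Matrix.transpose_mul, hQT, Matrix.mul_assoc] using this
  have hdecomp : Q = Pᵀ * Q * P + Rᵀ * Q * R := by
    calc Q = (P + R)ᵀ * Q * (P + R) := by rw [← hPR]; simp
      _ = Pᵀ * Q * P + Rᵀ * Q * P + (Pᵀ * Q * R + Rᵀ * Q * R) := by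
        simp only [transpose_add, Matrix.add_mul, Matrix.mul_add]
      _ = _ := by rw [horth, horth']; abel
  have hdil : (t • P + R)ᵀ * Q * (t • P + R) = (t * t) • (Pᵀ * Q * P) + Rᵀ * Q * R := by
    simp only [transpose_add, transpose_smul, Matrix.add_mul, Matrix.mul_add, Matrix.smul_mul,
      Matrix.mul_smul, horth, horth', smul_smul, smul_zero, add_zero, zero_add]
  have hsub : Q - (t • P + R)ᵀ * Q * (t • P + R) = (1 - t * t) • (Pᵀ * Q * P) := by
    rw [hdil, sub_smul, one_smul]
    nth_rw 1 [hdecomp]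
    abel
  rw [hsub]
  exact (hQ.posSemidef.conjTranspose_mul_mul_same P).smul (by nlinarith)

/-- Comparing powers near zero. -/
theorem le_of_forall_rpow_le_mul_rpow {a b q K : ℝ} (hq : 0 < q)
    (h : ∀ t : ℝ, 0 < t → t ≤ 1 → q * t ^ a ≤ K * t ^ b) : b ≤ a := by
  by_contra! hab
  have hlim : Filter.Tendsto (fun t : ℝ => K * t ^ (b - a)) (nhdsWithin 0 (Set.Ioi 0))
      (nhds (K * 0 ^ (b - a))) :=
    ((Real.continuousAt_rpow_const 0 (b - a) (Or.inr (by linarith))).tendsto.const_mul K).mono_left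
      nhdsWithin_le_nhds
  rw [Real.zero_rpow (by linarith), mul_zero] at hlim
  have hge : ∀ᶠ t : ℝ in nhdsWithin 0 (Set.Ioi 0), q ≤ K * t ^ (b - a) := by
    filter_upwards [Ioc_mem_nhdsGT (zero_lt_one' ℝ)] with t ht
    have hta := Real.rpow_pos_of_pos ht.1 a
    rw [Real.rpow_sub ht.1, ← mul_div_assoc, le_div_iff₀ hta]
    exact h t ht.1 ht.2
  exact absurd (ge_of_tendsto hlim hge) (not_le.2 hq)

theorem finrank_le_of_forall_prod_det_rpow_le {n m : ℕ} {ni : Fin m → ℕ}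
    {C : ∀ i, Matrix (Fin (ni i)) (Fin n) ℝ} {p : Fin m → ℝ}
    {Q : ∀ i, Matrix (Fin (ni i)) (Fin (ni i)) ℝ} (hQ : ∀ i, (Q i).PosDef) {K : ℝ}
    (hK : ∀ B : ∀ i, Matrix (Fin (ni i)) (Fin (ni i)) ℝ,
      (∀ i, (B i).PosDef ∧ (Q i - B i).PosSemidef) →
        ∏ i, (B i).det ^ p i ≤ K * (∑ i, p i • ((C i)ᵀ * B i * C i)).det)
    (V : Submodule ℝ (Fin n → ℝ)) :
    (finrank ℝ V : ℝ) ≤ ∑ j, p j * (finrank ℝ (V.map (C j).mulVecLin) : ℝ) := by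
  obtain ⟨V', hV'⟩ := V.exists_isCompl
  obtain ⟨P, hPP, hPV, -, -, hPdet⟩ := exists_projection_matrix hV'
  choose R _ hRid hRorth hRdet using fun i =>
    exists_orthogonal_projection_matrix (hQ i) (V.map (C i).mulVecLin)
  have hRC : ∀ i, R i * (C i * P) = C i * P := by
    intro i
    refine Matrix.ext_of_mulVec_single fun j => ?_
    rw [← mulVec_mulVec]
    refine hRid i _ ⟨P *ᵥ Pi.single j 1, hPV _, ?_⟩
    rw [mulVecLin_apply, mulVec_mulVec]
  let A : ℝ → Matrix (Fin n) (Fin n) ℝ := fun t => t • P + (1 - P)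
  let D : ∀ i, ℝ → Matrix (Fin (ni i)) (Fin (ni i)) ℝ := fun i t => t • R i + (1 - R i)
  let E : ∀ i, ℝ → Matrix (Fin (ni i)) (Fin n) ℝ := fun i t =>
    C i * P + D i t * (C i * (1 - P))
  have hDC : ∀ i t, D i t * C i = E i t * A t := by
    intro i t
    have h1 : D i t * (C i * P) = t • (C i * P) := by
      simp only [D, Matrix.add_mul, Matrix.smul_mul, Matrix.sub_mul, Matrix.one_mul, hRC, sub_self,
        add_zero]
    have h2 : P * A t = t • P := by
      simp only [A, Matrix.mul_add, Matrix.mul_smul, Matrix.mul_sub, Matrix.mul_one, hPP, sub_self,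
        add_zero]
    have h3 : (1 - P) * A t = 1 - P := by
      rw [Matrix.sub_mul, h2, Matrix.one_mul]
      simp only [A]
      abel
    have h4 : D i t * C i = D i t * (C i * P) + D i t * (C i * (1 - P)) := by
      rw [← Matrix.mul_add, ← Matrix.mul_add, add_sub_cancel, Matrix.mul_one]
    have h5 : E i t * A t = C i * (P * A t) + D i t * (C i * ((1 - P) * A t)) := by
      change (C i * P + D i t * (C i * (1 - P))) * A t = _
      rw [Matrix.add_mul (C i * P), Matrix.mul_assoc, Matrix.mul_assoc, Matrix.mul_assoc]
    rw [h4, h1, h5, h2, h3, Matrix.mul_smul]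
  let g : ℝ → ℝ := fun t => (∑ i, p i • ((E i t)ᵀ * Q i * E i t)).det
  have hg : Continuous g := by
    simp only [g, E, D]
    fun_prop
  obtain ⟨G, hG⟩ := (isCompact_Icc (a := (0 : ℝ)) (b := 1)).exists_bound_of_continuousOn
    hg.continuousOn
  have hMdet : ∀ t, (∑ i, p i • ((C i)ᵀ * ((D i t)ᵀ * Q i * D i t) * C i)).det
      = g t * t ^ (2 * finrank ℝ V) := by
    intro t
    have hM : ∑ i, p i • ((C i)ᵀ * ((D i t)ᵀ * Q i * D i t) * C i)
        = (A t)ᵀ * (∑ i, p i • ((E i t)ᵀ * Q i * E i t)) * A t := by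
      rw [Matrix.mul_sum, Matrix.sum_mul]
      refine Finset.sum_congr rfl fun i _ => ?_
      rw [Matrix.mul_smul, Matrix.smul_mul]
      congr 1
      calc (C i)ᵀ * ((D i t)ᵀ * Q i * D i t) * C i
          = (D i t * C i)ᵀ * Q i * (D i t * C i) := by
            simp only [transpose_mul, Matrix.mul_assoc]
        _ = _ := by rw [hDC]; simp only [transpose_mul, Matrix.mul_assoc]
    rw [hM, det_mul, det_mul, det_transpose, hPdet]
    ring
  refine le_of_forall_rpow_le_mul_rpow (q := ∏ i, (Q i).det ^ p i) (K := |K| * G)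
    (Finset.prod_pos fun i _ => Real.rpow_pos_of_pos (hQ i).det_pos _) fun s hs0 hs1 => ?_
  -- substitute `s = t ^ 2`
  obtain ⟨t, ht0, rfl⟩ : ∃ t : ℝ, 0 < t ∧ t ^ 2 = s :=
    ⟨√s, Real.sqrt_pos.2 hs0, Real.sq_sqrt hs0.le⟩
  have ht1 : t ≤ 1 := by nlinarith
  have hDdet : ∀ i, ((D i t)ᵀ * Q i * D i t).det
      = (Q i).det * (t ^ 2) ^ finrank ℝ (V.map (C i).mulVecLin) := by
    intro i
    rw [det_mul, det_mul, det_transpose, hRdet]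
    ring
  have hB : ∀ i, ((D i t)ᵀ * Q i * D i t).PosDef ∧
      (Q i - (D i t)ᵀ * Q i * D i t).PosSemidef := by
    intro i
    refine ⟨(hQ i).conjTranspose_mul_mul_same (B := D i t) ?_,
      posSemidef_sub_dilation (hQ i) (hRorth i) ht0.le ht1⟩
    refine mulVec_injective_of_isUnit ((isUnit_iff_isUnit_det _).2 ?_)
    rw [hRdet]
    exact (pow_pos ht0 _).ne'.isUnit
  have hle := hK _ hB
  rw [hMdet] at hle
  have hlhs : ∏ i, ((D i t)ᵀ * Q i * D i t).det ^ p i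
      = (∏ i, (Q i).det ^ p i) *
        (t ^ 2) ^ (∑ j, p j * (finrank ℝ (V.map (C j).mulVecLin) : ℝ)) := by
    rw [Real.rpow_sum_of_pos hs0, ← Finset.prod_mul_distrib]
    refine Finset.prod_congr rfl fun i _ => ?_
    rw [hDdet, Real.mul_rpow (hQ i).det_pos.le (by positivity), ← Real.rpow_natCast (t ^ 2),
      ← Real.rpow_mul hs0.le, mul_comm (p i)]
  rw [hlhs, pow_mul, ← Real.rpow_natCast (t ^ 2)] at hle
  have hpow := Real.rpow_pos_of_pos hs0 (finrank ℝ V)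
  calc _ ≤ K * (g t * (t ^ 2) ^ (finrank ℝ V : ℝ)) := hle
    _ ≤ |K * g t| * (t ^ 2) ^ (finrank ℝ V : ℝ) := by
      rw [← mul_assoc]
      exact mul_le_mul_of_nonneg_right (le_abs_self _) hpow.le
    _ ≤ _ := by
      rw [abs_mul]
      exact mul_le_mul_of_nonneg_right
        (mul_le_mul_of_nonneg_left (hG t ⟨ht0.le, ht1⟩) (abs_nonneg K)) hpow.le

/-- Summation by parts: a sequence with nonnegative partial sums pairs nonnegatively with a
nonnegative antitone sequence. -/
theorem sum_mul_nonneg_of_antitone {n : ℕ} {a y : Fin n → ℝ} (hy : Antitone y)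
    (hy0 : ∀ k, 0 ≤ y k) (ha : ∀ k, 0 ≤ ∑ j with j ≤ k, a j) : 0 ≤ ∑ k, a k * y k := by
  suffices h : ∀ k : Fin n, y k * ∑ j with j ≤ k, a j ≤ ∑ j with j ≤ k, a j * y j by
    rcases n with _ | n
    · simp
    · have hlast := h (Fin.last n)
      have := mul_nonneg (hy0 (Fin.last n)) (ha (Fin.last n))
      simp only [Fin.le_last, Finset.filter_true] at hlast this
      exact this.trans hlast
  rcases n with _ | n
  · exact fun k => k.elim0
  intro k
  induction k using Fin.induction with
  | zero =>
    simp [Finset.filter_eq', mul_comm]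
  | succ k ih =>
    have hfilter : ({j | j ≤ k.succ} : Finset (Fin (n + 1)))
        = insert k.succ ({j | j ≤ k.castSucc} : Finset (Fin (n + 1))) := by
      ext j
      simp only [Finset.mem_filter, Finset.mem_univ, true_and, Finset.mem_insert, Fin.le_def,
        Fin.ext_iff, Fin.val_succ, Fin.val_castSucc]
      omega
    have hnot : k.succ ∉ ({j | j ≤ k.castSucc} : Finset (Fin (n + 1))) := by
      simp [Fin.le_def]
    rw [hfilter, Finset.sum_insert hnot, Finset.sum_insert hnot, mul_add, mul_comm (y k.succ)]
    have hyk : y k.succ ≤ y k.castSucc := hy (Fin.castSucc_lt_succ).le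
    have := mul_le_mul_of_nonneg_right hyk (ha k.castSucc)
    linarith

/-- Greedy selection of a basis from a spanning family indexed by `Fin n`. -/
theorem exists_greedy_basis {n k : ℕ} (v : Fin n → (Fin k → ℝ))
    (hv : Submodule.span ℝ (Set.range v) = ⊤) :
    ∃ f : Fin k → Fin n, LinearIndependent ℝ (v ∘ f) ∧
      ∀ j, finrank ℝ (Submodule.span ℝ (v '' Set.Iic j)) ≤ Finset.card {l | f l ≤ j} := by
  classical
  let I : Finset (Fin n) := {j | v j ∉ Submodule.span ℝ (v '' Set.Iio j)}
  have hmem : ∀ j, v j ∈ Submodule.span ℝ (v '' (↑I ∩ Set.Iic j)) := by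
    intro j
    induction j using WellFoundedLT.induction with
    | ind j ih =>
      by_cases hj : j ∈ I
      · exact Submodule.subset_span ⟨j, ⟨hj, Set.mem_Iic.2 le_rfl⟩, rfl⟩
      · have hj' : v j ∈ Submodule.span ℝ (v '' Set.Iio j) := by simpa [I] using hj
        refine Submodule.span_le.2 ?_ hj'
        rintro _ ⟨i, hi, rfl⟩
        refine Submodule.span_mono (Set.image_mono ?_) (ih i hi)
        exact Set.inter_subset_inter_right _ (Set.Iic_subset_Iic.2 (le_of_lt hi))
  have hspan : ∀ j, Submodule.span ℝ (v '' Set.Iic j)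
      ≤ Submodule.span ℝ (v '' (↑I ∩ Set.Iic j)) := by
    intro j
    refine Submodule.span_le.2 ?_
    rintro _ ⟨i, hi, rfl⟩
    exact Submodule.span_mono
      (Set.image_mono (Set.inter_subset_inter_right _ (Set.Iic_subset_Iic.2 hi))) (hmem i)
  have hind : ∀ J : Finset (Fin n), J ⊆ I → LinearIndepOn ℝ v (J : Set (Fin n)) := by
    intro J
    induction J using Finset.induction_on_max with
    | empty => simp
    | insert a s has ih =>
      intro hs
      rw [Finset.coe_insert]
      refine (ih fun x hx => hs (Finset.mem_insert_of_mem hx)).insert fun hmem' => ?_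
      have ha : v a ∉ Submodule.span ℝ (v '' Set.Iio a) := by
        simpa [I] using hs (Finset.mem_insert_self a s)
      exact ha (Submodule.span_mono (Set.image_mono fun x hx => has x hx) hmem')
  have htop : Submodule.span ℝ (v '' (I : Set (Fin n))) = ⊤ := by
    rw [eq_top_iff, ← hv]
    refine Submodule.span_le.2 ?_
    rintro _ ⟨j, rfl⟩
    exact Submodule.span_mono (Set.image_mono Set.inter_subset_left) (hmem j)
  have hcard : I.card = k := by
    have h1 := finrank_span_eq_card (hind I subset_rfl)
    rw [Set.image_eq_range] at htop
    erw [htop] at h1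
    simpa using h1.symm
  let e := I.equivFinOfCardEq hcard
  refine ⟨fun l => e.symm l, (hind I subset_rfl).comp e.symm e.symm.injective, fun j => ?_⟩
  calc finrank ℝ (Submodule.span ℝ (v '' Set.Iic j))
      ≤ finrank ℝ (Submodule.span ℝ (v '' (↑I ∩ Set.Iic j))) := Submodule.finrank_mono (hspan j)
    _ ≤ ({i ∈ I | i ≤ j} : Finset (Fin n)).card := by
      have himage : v '' (↑I ∩ Set.Iic j)
          = (({i ∈ I | i ≤ j} : Finset (Fin n)).image v : Finset (Fin k → ℝ)) := by
        ext x
        simp [and_assoc]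
      rw [himage]
      exact (finrank_span_finset_le_card _).trans Finset.card_image_le
    _ ≤ _ := by
      refine Finset.card_le_card_of_surjOn (fun l => (e.symm l : Fin n)) ?_
      intro i hi
      simp only [Finset.coe_filter, Set.mem_ofPred_eq] at hi
      exact ⟨e ⟨i, hi.1⟩, by simpa using hi.2, by simp⟩

/-- A weak form of Hadamard's inequality for positive semidefinite matrices. -/
theorem Matrix.PosSemidef.det_le_factorial_mul_prod {k : ℕ} {A : Matrix (Fin k) (Fin k) ℝ}
    (hA : A.PosSemidef) {c : ℝ} {μ : Fin k → ℝ} (hμ : ∀ l, 0 < μ l)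
    (hdiag : ∀ l, A l l ≤ c * μ l) : A.det ≤ k.factorial * c ^ k * ∏ l, μ l := by
  let s : Fin k → ℝ := fun l => (√(μ l))⁻¹
  have hs : ∀ l, s l * s l = (μ l)⁻¹ := fun l => by
    rw [← mul_inv, Real.mul_self_sqrt (hμ l).le]
  let A' : Matrix (Fin k) (Fin k) ℝ := diagonal s * A * diagonal s
  have hA' : A'.PosSemidef := by
    have := hA.conjTranspose_mul_mul_same (diagonal s)
    rwa [conjTranspose_eq_transpose_of_trivial, diagonal_transpose] at this
  have hdiag' : ∀ l, A' l l ≤ c := by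
    intro l
    have h1 : A' l l = A l l * (μ l)⁻¹ := by
      rw [← hs]
      simp only [A', mul_diagonal, diagonal_mul]
      ring
    rw [h1, mul_inv_le_iff₀ (hμ l)]
    exact hdiag l
  have hentry : ∀ i j, |A' i j| ≤ c := by
    intro i j
    have hdet := (hA'.submatrix ![i, j]).det_nonneg
    have hsymm : A' j i = A' i j := hA'.1.apply i j
    rw [det_fin_two] at hdet
    simp only [submatrix_apply, Matrix.cons_val_zero, Matrix.cons_val_one, hsymm] at hdet
    have hi := hA'.diag_nonneg (i := i)
    have hj := hA'.diag_nonneg (i := j)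
    refine abs_le_of_sq_le_sq ?_ (hi.trans (hdiag' i))
    nlinarith [mul_le_mul (hdiag' i) (hdiag' j) hj (hi.trans (hdiag' i))]
  have hbound : A'.det ≤ k.factorial * c ^ k := by
    have := Matrix.det_le (abv := AbsoluteValue.abs) hentry
    simp only [AbsoluteValue.abs_apply, Fintype.card_fin, nsmul_eq_mul] at this
    exact (le_abs_self _).trans this
  have hdetA' : A'.det * ∏ l, μ l = A.det := by
    simp only [A', det_mul, det_diagonal]
    have hss : (∏ l, s l) * (∏ l, s l) * ∏ l, μ l = 1 := by
      rw [← Finset.prod_mul_distrib, ← Finset.prod_mul_distrib]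
      exact Finset.prod_eq_one fun l _ => by rw [hs, inv_mul_cancel₀ (hμ l).ne']
    linear_combination A.det * hss
  rw [← hdetA']
  exact mul_le_mul_of_nonneg_right hbound (Finset.prod_pos fun l _ => hμ l).le

/-- Upper bound for `det B` in terms of selected eigenvalues of a matrix dominating
`p • Cᵀ B C`. -/
theorem det_mul_sq_det_submatrix_le {n k : ℕ} {C : Matrix (Fin k) (Fin n) ℝ} {p : ℝ} (hp : 0 < p)
    {B : Matrix (Fin k) (Fin k) ℝ} (hB : B.PosSemidef) {M U : Matrix (Fin n) (Fin n) ℝ}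
    (hM : (M - p • (Cᵀ * B * C)).PosSemidef) {μ : Fin n → ℝ} (hU : Uᵀ * M * U = diagonal μ)
    (hμ : ∀ j, 0 < μ j) (f : Fin k → Fin n) :
    B.det * ((C * U).submatrix id f).det ^ 2
      ≤ k.factorial * p⁻¹ ^ k * ∏ l, μ (f l) := by
  let G := (C * U).submatrix id f
  have hG : (Gᵀ * B * G).PosSemidef := hB.conjTranspose_mul_mul_same G
  have hdet : (Gᵀ * B * G).det = B.det * G.det ^ 2 := by
    rw [det_mul, det_mul, det_transpose]
    ring
  have hsub : Gᵀ * B * G = (Uᵀ * (Cᵀ * B * C) * U).submatrix f f := by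
    ext i j
    have : Uᵀ * (Cᵀ * B * C) * U = (C * U)ᵀ * B * (C * U) := by
      simp only [transpose_mul, Matrix.mul_assoc]
    rw [this]
    rfl
  have hdiag : ∀ l, (Gᵀ * B * G) l l ≤ p⁻¹ * μ (f l) := by
    intro l
    have h1 := (hM.conjTranspose_mul_mul_same U).diag_nonneg (i := f l)
    rw [conjTranspose_eq_transpose_of_trivial, Matrix.mul_sub, Matrix.sub_mul, hU,
      Matrix.mul_smul, Matrix.smul_mul, Matrix.sub_apply, Matrix.smul_apply, diagonal_apply_eq,
      smul_eq_mul] at h1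
    rw [hsub, submatrix_apply, inv_mul_eq_div, le_div_iff₀ hp]
    linarith
  rw [← hdet]
  exact hG.det_le_factorial_mul_prod (fun l => hμ (f l)) hdiag

theorem sum_smul_sum_comp_le_of_monotone {n m : ℕ} {ni : Fin m → ℕ} {p : Fin m → ℝ}
    {f : ∀ i, Fin (ni i) → Fin n}
    (hf : ∀ k : Fin n, (k : ℝ) + 1 ≤ ∑ i, p i * (Finset.card {l | f i l ≤ k} : ℝ))
    {x : Fin n → ℝ} (hx : Monotone x) {L : ℝ} (hL : ∀ k, x k ≤ L) :
    ∑ i, p i * ∑ l, x (f i l) ≤ ∑ k, x k + L * (∑ i, p i * (ni i : ℝ) - n) := by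
  let a : Fin n → ℝ := fun k => ∑ i, p i * (∑ l, if f i l = k then 1 else 0) - 1
  have hpair : ∀ (s : Finset (Fin n)) (y : Fin n → ℝ), ∑ k ∈ s, a k * y k
      = ∑ i, p i * (∑ l, if f i l ∈ s then y (f i l) else 0) - ∑ k ∈ s, y k := by
    intro s y
    simp only [a, sub_mul, one_mul, Finset.sum_sub_distrib, Finset.sum_mul]
    congr 1
    rw [Finset.sum_comm]
    refine Finset.sum_congr rfl fun i _ => ?_
    simp_rw [mul_assoc]
    rw [← Finset.mul_sum]
    congr 1
    simp_rw [Finset.sum_mul]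
    rw [Finset.sum_comm]
    refine Finset.sum_congr rfl fun l _ => ?_
    simp [Finset.sum_ite_eq]
  have hkey := sum_mul_nonneg_of_antitone (a := a) (y := fun k => L - x k)
    (fun i j hij => sub_le_sub_left (hx hij) L) (fun k => sub_nonneg.2 (hL k)) (fun k => by
      have h1 := hpair {j | j ≤ k} (fun _ => 1)
      have h2 : (Finset.card {j : Fin n | j ≤ k} : ℝ) = k + 1 := by
        have : ({j : Fin n | j ≤ k} : Finset (Fin n)) = Finset.Iic k := by ext; simp
        rw [this, Fin.card_Iic]
        push_cast
        rfl
      simp only [mul_one, Finset.mem_filter, Finset.mem_univ, true_and, Finset.sum_boole,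
        Finset.sum_const, nsmul_eq_mul, h2] at h1
      rw [h1]
      exact sub_nonneg.2 (hf k))
  rw [hpair] at hkey
  simp only [Finset.mem_univ, if_true, Finset.sum_sub_distrib, Finset.sum_const, Finset.card_univ,
    Fintype.card_fin, nsmul_eq_mul, mul_sub] at hkey
  have h3 : ∑ i, p i * ((ni i : ℝ) * L) = L * ∑ i, p i * (ni i : ℝ) := by
    rw [Finset.mul_sum]
    exact Finset.sum_congr rfl fun i _ => by ring
  rw [h3] at hkey
  linarith

/-- Under the dimension conditions, every basis of `ℝⁿ` admits compatible choices of bases of the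
targets with large initial segments. -/
theorem exists_selection {n m : ℕ} {ni : Fin m → ℕ} {C : ∀ i, Matrix (Fin (ni i)) (Fin n) ℝ}
    (hCsurj : ∀ i, Function.Surjective (C i).mulVec) {p : Fin m → ℝ} (hp : ∀ i, 0 < p i)
    (hdim : ∀ V : Submodule ℝ (Fin n → ℝ),
      (finrank ℝ V : ℝ) ≤ ∑ j, p j * (finrank ℝ (V.map (C j).mulVecLin) : ℝ))
    {U : Matrix (Fin n) (Fin n) ℝ} (hU : IsUnit U) :
    ∃ f : ∀ i, Fin (ni i) → Fin n, (∀ i, ((C i * U).submatrix id (f i)).det ≠ 0) ∧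
      ∀ k : Fin n, (k : ℝ) + 1 ≤ ∑ i, p i * (Finset.card {l | f i l ≤ k} : ℝ) := by
  have hspan : ∀ i, Submodule.span ℝ (Set.range (C i * U).col) = ⊤ := by
    intro i
    rw [← range_mulVecLin, LinearMap.range_eq_top, mulVecLin_mul, LinearMap.coe_comp]
    exact (hCsurj i).comp (mulVec_surjective_iff_isUnit.2 hU)
  choose f hind hcard using fun i => exists_greedy_basis (C i * U).col (hspan i)
  refine ⟨f, fun i => ?_, fun k => ?_⟩
  · rw [← isUnit_iff_ne_zero, ← isUnit_iff_isUnit_det, ← linearIndependent_cols_iff_isUnit]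
    exact hind i
  · have hUind : LinearIndependent ℝ U.col := linearIndependent_cols_iff_isUnit.2 hU
    have hfin : finrank ℝ (Submodule.span ℝ (U.col '' Set.Iic k)) = k + 1 := by
      have h1 := finrank_span_eq_card
        (hUind.comp ((↑) : Set.Iic k → Fin n) Subtype.val_injective)
      rw [Set.range_comp, Subtype.range_coe] at h1
      rw [h1, Fintype.card_of_finset' (Finset.Iic k) (by simp), Fin.card_Iic]
    have h1 := hdim (Submodule.span ℝ (U.col '' Set.Iic k))
    rw [hfin] at h1
    push_cast at h1
    refine h1.trans (Finset.sum_le_sum fun i _ => mul_le_mul_of_nonneg_left ?_ (hp i).le)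
    rw [Submodule.map_span, Set.image_image]
    exact_mod_cast hcard i k

/-- Sorted orthogonal diagonalization of a real symmetric matrix. -/
theorem exists_orthogonal_diagonalization {n : ℕ} {M : Matrix (Fin n) (Fin n) ℝ}
    (hM : M.IsHermitian) : ∃ (U : Matrix (Fin n) (Fin n) ℝ) (μ : Fin n → ℝ), Uᵀ * U = 1 ∧
      Monotone μ ∧ Uᵀ * M * U = diagonal μ := by
  let U₀ : Matrix (Fin n) (Fin n) ℝ := hM.eigenvectorUnitary
  have hU₀ : U₀ᵀ * U₀ = 1 := Unitary.coe_star_mul_self hM.eigenvectorUnitary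
  have hdiag : U₀ᵀ * M * U₀ = diagonal hM.eigenvalues := by
    have h := hM.conjStarAlgAut_star_eigenvectorUnitary
    rw [Unitary.conjStarAlgAut_star_apply] at h
    exact h
  let σ := Tuple.sort hM.eigenvalues
  refine ⟨U₀.submatrix id σ, hM.eigenvalues ∘ σ, ?_, Tuple.monotone_sort _, ?_⟩
  · have : (U₀.submatrix id σ)ᵀ * U₀.submatrix id σ = (U₀ᵀ * U₀).submatrix σ σ := rfl
    rw [this, hU₀, submatrix_one_equiv]
  · have : (U₀.submatrix id σ)ᵀ * M * U₀.submatrix id σ = (U₀ᵀ * M * U₀).submatrix σ σ := rfl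
    rw [this, hdiag, submatrix_diagonal_equiv]

theorem isCompact_setOf_transpose_mul_self_eq_one (n : ℕ) :
    IsCompact {U : Matrix (Fin n) (Fin n) ℝ | Uᵀ * U = 1} := by
  have hclosed : IsClosed {U : Matrix (Fin n) (Fin n) ℝ | Uᵀ * U = 1} :=
    isClosed_eq (by fun_prop) continuous_const
  have hbox : IsCompact (Set.univ.pi fun _ : Fin n => Set.univ.pi fun _ : Fin n =>
      Set.Icc (-1 : ℝ) 1) :=
    isCompact_univ_pi fun _ => isCompact_univ_pi fun _ => isCompact_Icc
  refine IsCompact.of_isClosed_subset hbox hclosed fun U hU i _ j _ => ?_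
  have hU' : U ∈ unitaryGroup (Fin n) ℝ := mem_unitaryGroup_iff'.2 hU
  exact abs_le.1 (entry_norm_bound_of_unitary hU' i j)

theorem exists_forall_prod_det_rpow_le {n m : ℕ} {ni : Fin m → ℕ}
    {C : ∀ i, Matrix (Fin (ni i)) (Fin n) ℝ}
    (hCsurj : ∀ i, Function.Surjective (C i).mulVec)
    (hker : ∀ x : Fin n → ℝ, (∀ i, (C i).mulVec x = 0) → x = 0)
    {p : Fin m → ℝ} (hp : ∀ i, 0 < p i) (Q : ∀ i, Matrix (Fin (ni i)) (Fin (ni i)) ℝ)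
    (hdim : ∀ V : Submodule ℝ (Fin n → ℝ),
      (finrank ℝ V : ℝ) ≤ ∑ j, p j * (finrank ℝ (V.map (C j).mulVecLin) : ℝ)) :
    ∃ K : ℝ, ∀ B : ∀ i, Matrix (Fin (ni i)) (Fin (ni i)) ℝ,
      (∀ i, (B i).PosDef ∧ (Q i - B i).PosSemidef) →
        ∏ i, (B i).det ^ p i ≤ K * (∑ i, p i • ((C i)ᵀ * B i * C i)).det := by
  let M : (∀ i, Matrix (Fin (ni i)) (Fin (ni i)) ℝ) → Matrix (Fin n) (Fin n) ℝ :=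
    fun B => ∑ i, p i • ((C i)ᵀ * B i * C i)
  suffices h : ∃ K : ℝ, ∀ U ∈ {U : Matrix (Fin n) (Fin n) ℝ | Uᵀ * U = 1},
      ∀ B : ∀ i, Matrix (Fin (ni i)) (Fin (ni i)) ℝ,
      (∀ i, (B i).PosDef ∧ (Q i - B i).PosSemidef) →
      ∀ μ : Fin n → ℝ, Uᵀ * U = 1 → Monotone μ → Uᵀ * M B * U = diagonal μ →
        ∏ i, (B i).det ^ p i ≤ K * (M B).det by
    obtain ⟨K, hK⟩ := h
    refine ⟨K, fun B hB => ?_⟩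
    obtain ⟨U, μ, hU, hμ, hdiag⟩ := exists_orthogonal_diagonalization
      (posDef_sum_smul_transpose_mul_mul hker hp fun i => (hB i).1).1
    exact hK U hU B hB μ hU hμ hdiag
  have hMpos : ∀ B : ∀ i, Matrix (Fin (ni i)) (Fin (ni i)) ℝ, (∀ i, (B i).PosDef) →
      (M B).PosDef := fun B hB => posDef_sum_smul_transpose_mul_mul hker hp hB
  refine (isCompact_setOf_transpose_mul_self_eq_one n).induction_on ⟨0, by simp⟩ ?_ ?_ ?_
  · rintro s t hst ⟨K, hK⟩
    exact ⟨K, fun U hU => hK U (hst hU)⟩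
  · rintro s t ⟨K₁, hK₁⟩ ⟨K₂, hK₂⟩
    refine ⟨max K₁ K₂, fun U hU B hB μ h1 h2 h3 => ?_⟩
    have hdet := (hMpos B fun i => (hB i).1).det_pos.le
    rcases hU with hU | hU
    · exact (hK₁ U hU B hB μ h1 h2 h3).trans
        (mul_le_mul_of_nonneg_right (le_max_left _ _) hdet)
    · exact (hK₂ U hU B hB μ h1 h2 h3).trans
        (mul_le_mul_of_nonneg_right (le_max_right _ _) hdet)
  intro U₀ hU₀
  obtain ⟨f, hfdet, hfcard⟩ := exists_selection hCsurj hp hdim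
    (IsUnit.of_mul_eq_one_right (U₀ᵀ) hU₀)
  -- near `U₀`, the selected minors stay bounded away from zero
  let δ : Fin m → ℝ := fun i => ((C i * U₀).submatrix id (f i)).det ^ 2 / 2
  have hδ : ∀ i, 0 < δ i := fun i => by
    have := hfdet i
    positivity
  have hnhds : {U : Matrix (Fin n) (Fin n) ℝ |
      ∀ i, δ i < ((C i * U).submatrix id (f i)).det ^ 2} ∈ nhds U₀ := by
    refine Filter.eventually_all.2 fun i => ?_
    have hcont : Continuous fun U : Matrix (Fin n) (Fin n) ℝ =>
        ((C i * U).submatrix id (f i)).det ^ 2 := by fun_prop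
    exact hcont.continuousAt.eventually_const_lt (half_lt_self (by have := hfdet i; positivity))
  refine ⟨_, mem_nhdsWithin_of_mem_nhds hnhds, ?_⟩
  let c : Fin m → ℝ := fun i => (ni i).factorial * (p i)⁻¹ ^ ni i / δ i
  have hc : ∀ i, 0 < c i := fun i => by
    have := hδ i
    have := hp i
    positivity
  let L := Real.log (M Q).trace
  refine ⟨(∏ i, c i ^ p i) * Real.exp (L * (∑ i, p i * (ni i : ℝ) - n)),
    fun U hUmem B hB μ hU hμmono hdiag => ?_⟩
  have hMB := hMpos B fun i => (hB i).1
  have hUunit : IsUnit U := IsUnit.of_mul_eq_one_right Uᵀ hU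
  have hμpos : ∀ j, 0 < μ j := by
    have h1 := hMB.conjTranspose_mul_mul_same (mulVec_injective_of_isUnit hUunit)
    rw [conjTranspose_eq_transpose_of_trivial, hdiag] at h1
    exact posDef_diagonal_iff.1 h1
  have hdetM : (M B).det = ∏ j, μ j := by
    have h1 := congrArg det hdiag
    have h2 := congrArg det hU
    rw [det_mul, det_mul, det_diagonal] at h1
    rw [det_mul, det_one] at h2
    rw [← h1, mul_right_comm, h2, one_mul]
  have htrace : ∀ j, μ j ≤ (M Q).trace := by
    intro j
    have h1 : (M B).trace = ∑ j, μ j := by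
      rw [← trace_diagonal, ← hdiag, trace_mul_cycle, mul_eq_one_comm.1 hU, Matrix.one_mul]
    have h2 : (M Q - M B).PosSemidef := by
      have : M Q - M B = ∑ i, p i • ((C i)ᵀ * (Q i - B i) * C i) := by
        simp only [M, ← Finset.sum_sub_distrib, ← smul_sub, ← Matrix.sub_mul, ← Matrix.mul_sub]
      rw [this]
      exact posSemidef_sum _ fun i _ =>
        ((hB i).2.conjTranspose_mul_mul_same (C i)).smul (hp i).le
    have h3 := h2.trace_nonneg
    rw [trace_sub, h1] at h3
    have h4 := Finset.single_le_sum (fun j _ => (hμpos j).le) (Finset.mem_univ j)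
    linarith
  have hBdet : ∀ i, (B i).det ≤ c i * ∏ l, μ (f i l) := by
    intro i
    have hdom : (M B - p i • ((C i)ᵀ * B i * C i)).PosSemidef := by
      have : M B - p i • ((C i)ᵀ * B i * C i)
          = ∑ j ∈ Finset.univ.erase i, p j • ((C j)ᵀ * B j * C j) := by
        rw [sub_eq_iff_eq_add, Finset.sum_erase_add _ _ (Finset.mem_univ i)]
      rw [this]
      exact posSemidef_sum _ fun j _ =>
        ((hB j).1.posSemidef.conjTranspose_mul_mul_same (C j)).smul (hp j).le
    have h1 := det_mul_sq_det_submatrix_le (hp i) (hB i).1.posSemidef hdom hdiag hμpos (f i)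
    have h2 : (B i).det * δ i ≤ _ :=
      (mul_le_mul_of_nonneg_left (le_of_lt (hUmem i)) (hB i).1.det_pos.le).trans h1
    rw [← le_div_iff₀ (hδ i)] at h2
    exact h2.trans_eq (by simp only [c]; ring)
  have hlog := sum_smul_sum_comp_le_of_monotone hfcard (x := fun j => Real.log (μ j))
    (fun i j hij => Real.log_le_log (hμpos i) (hμmono hij))
    (fun j => Real.log_le_log (hμpos j) (htrace j))
  have hprodpos : ∀ i, 0 < ∏ l, μ (f i l) := fun i => Finset.prod_pos fun l _ => hμpos _
  have hexp : ∏ i, (∏ l, μ (f i l)) ^ p i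
      ≤ Real.exp (L * (∑ i, p i * (ni i : ℝ) - n)) * ∏ j, μ j := by
    have h1 : ∏ i, (∏ l, μ (f i l)) ^ p i = Real.exp (∑ i, p i * ∑ l, Real.log (μ (f i l))) := by
      rw [Real.exp_sum]
      refine Finset.prod_congr rfl fun i _ => ?_
      rw [Real.rpow_def_of_pos (hprodpos i), Real.log_prod fun l _ => (hμpos _).ne', mul_comm]
    have h2 : ∏ j, μ j = Real.exp (∑ j, Real.log (μ j)) := by
      rw [Real.exp_sum]
      exact Finset.prod_congr rfl fun j _ => (Real.exp_log (hμpos j)).symm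
    rw [h1, h2, ← Real.exp_add, Real.exp_le_exp]
    linarith
  rw [hdetM]
  calc ∏ i, (B i).det ^ p i
      ≤ ∏ i, (c i * ∏ l, μ (f i l)) ^ p i :=
        Finset.prod_le_prod (fun i _ => Real.rpow_nonneg (hB i).1.det_pos.le _) fun i _ =>
          Real.rpow_le_rpow (hB i).1.det_pos.le (hBdet i) (hp i).le
    _ = (∏ i, c i ^ p i) * ∏ i, (∏ l, μ (f i l)) ^ p i := by
        rw [← Finset.prod_mul_distrib]
        exact Finset.prod_congr rfl fun i _ => Real.mul_rpow (hc i).le (hprodpos i).le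
    _ ≤ (∏ i, c i ^ p i) * (Real.exp (L * (∑ i, p i * (ni i : ℝ) - n)) * ∏ j, μ j) :=
        mul_le_mul_of_nonneg_left hexp
          (Finset.prod_nonneg fun i _ => Real.rpow_nonneg (hc i).le _)
    _ = _ := by ring

/-- The regularized Brascamp–Lieb constant is finite iff the usual dimension
conditions hold on every subspace. -/
theorem BLconst_lt_top_iff
    {n m : ℕ} (hm : 1 ≤ m) {ni : Fin m → ℕ}
    (C : ∀ i, Matrix (Fin (ni i)) (Fin n) ℝ)
    (hCsurj : ∀ i, Function.Surjective (C i).mulVec)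
    (hker : ∀ x : Fin n → ℝ, (∀ i, (C i).mulVec x = 0) → x = 0)
    (p : Fin m → ℝ) (hp : ∀ i, 0 < p i)
    (Q : ∀ i, Matrix (Fin (ni i)) (Fin (ni i)) ℝ) (hQ : ∀ i, (Q i).PosDef) :
    BLconst C p Q < ⊤ ↔
      ∀ V : Submodule ℝ (Fin n → ℝ),
        (finrank ℝ V : ℝ) ≤ ∑ j, p j * (finrank ℝ (V.map (C j).mulVecLin) : ℝ) := by
  rw [BLconst_lt_top_iff_exists_forall_le hker hp Q]
  exact ⟨fun ⟨_, hK⟩ V => finrank_le_of_forall_prod_det_rpow_le hQ hK V,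
    exists_forall_prod_det_rpow_le hCsurj hker hp Q⟩
end
end

section
/- Let (C,p,Q) be a Brascamp–Lieb datum and let V_c ⊆ ℝⁿ be a critical subspace, i.e. dim V_c = ∑_{j=1}^m p_j dim(C_j V_c). Then the following are equivalent: (i) dim V ≤ ∑_{j=1}^m p_j dim(C_j V) for every subspace V ⊆ ℝⁿ; (ii) dim V ≤ ∑_{j=1}^m p_j dim(C_j V) for every subspace V ⊆ V_c, and dim V − dim V_c ≤ ∑_{j=1}^m p_j (dim(C_j V) − dim(C_j V_c)) for every subspace V with V_c ⊆ V ⊆ ℝⁿ. -/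
open MeasureTheory Matrix Module
open scoped ENNReal

noncomputable section

/-- The dimension of the image under a linear map is a submodular function of the subspace. -/
theorem finrank_map_sup_add_finrank_map_inf_le {K E F : Type*} [DivisionRing K]
    [AddCommGroup E] [Module K E] [AddCommGroup F] [Module K F] [FiniteDimensional K F]
    (f : E →ₗ[K] F) (V W : Submodule K E) :
    finrank K ((V ⊔ W).map f) + finrank K ((V ⊓ W).map f) ≤
      finrank K (V.map f) + finrank K (W.map f) := by
  rw [← Submodule.finrank_sup_add_finrank_inf_eq (V.map f), Submodule.map_sup]
  gcongr
  exact Submodule.finrank_mono (Submodule.map_inf_le f)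

/-- For a Brascamp–Lieb datum with a critical subspace `V_c`, the dimension
condition holds globally iff it holds for the restricted and quotient data. -/
theorem dimension_condition_split_along_critical_subspace
    {n m : ℕ} (hm : 1 ≤ m) {ni : Fin m → ℕ}
    (C : ∀ i, Matrix (Fin (ni i)) (Fin n) ℝ)
    (hCsurj : ∀ i, Function.Surjective (C i).mulVec)
    (hker : ∀ x : Fin n → ℝ, (∀ i, (C i).mulVec x = 0) → x = 0)
    (p : Fin m → ℝ) (hp : ∀ i, 0 < p i)
    (Q : ∀ i, Matrix (Fin (ni i)) (Fin (ni i)) ℝ) (hQ : ∀ i, (Q i).PosDef)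
    (Vc : Submodule ℝ (Fin n → ℝ))
    (hVc : (finrank ℝ Vc : ℝ) = ∑ j, p j * (finrank ℝ (Vc.map (C j).mulVecLin) : ℝ)) :
    (∀ V : Submodule ℝ (Fin n → ℝ),
        (finrank ℝ V : ℝ) ≤ ∑ j, p j * (finrank ℝ (V.map (C j).mulVecLin) : ℝ)) ↔
      ((∀ V : Submodule ℝ (Fin n → ℝ), V ≤ Vc →
          (finrank ℝ V : ℝ) ≤ ∑ j, p j * (finrank ℝ (V.map (C j).mulVecLin) : ℝ)) ∧
        (∀ V : Submodule ℝ (Fin n → ℝ), Vc ≤ V →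
          (finrank ℝ V : ℝ) - (finrank ℝ Vc : ℝ) ≤
            ∑ j, p j * ((finrank ℝ (V.map (C j).mulVecLin) : ℝ) -
              (finrank ℝ (Vc.map (C j).mulVecLin) : ℝ)))) := by
  simp only [mul_sub, Finset.sum_sub_distrib, ← hVc, sub_le_sub_iff_right]
  refine ⟨fun h => ⟨fun V _ => h V, fun V _ => h V⟩, fun ⟨hsub, hsup⟩ V => ?_⟩
  have hdim : (finrank ℝ ↥(V ⊔ Vc) : ℝ) + finrank ℝ ↥(V ⊓ Vc) = finrank ℝ V + finrank ℝ Vc :=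
    mod_cast Submodule.finrank_sup_add_finrank_inf_eq V Vc
  have himage : ∑ j, p j * (finrank ℝ ((V ⊔ Vc).map (C j).mulVecLin) : ℝ) +
      ∑ j, p j * (finrank ℝ ((V ⊓ Vc).map (C j).mulVecLin) : ℝ) ≤
      ∑ j, p j * (finrank ℝ (V.map (C j).mulVecLin) : ℝ) +
        ∑ j, p j * (finrank ℝ (Vc.map (C j).mulVecLin) : ℝ) := by
    simp only [← Finset.sum_add_distrib, ← mul_add]
    refine Finset.sum_le_sum fun j _ => mul_le_mul_of_nonneg_left ?_ (hp j).le
    exact_mod_cast finrank_map_sup_add_finrank_map_inf_le (C j).mulVecLin V Vc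
  linarith [hsub (V ⊓ Vc) inf_le_right, hsup (V ⊔ Vc) le_sup_right]
end
end
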